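/- arXiv:1208.2455 — 6 statements merged into one kernel-verified Lean document; each statement's English description precedes it below -/
import Mathlib

section
/- Let c > 0 and m > 0 be real numbers, and let a, b > 0 satisfy √c·(a+b) < π and √c·(cot(√c·a) + cot(√c·b)) = 2m. Then a + b ≥ (2/√c)·arctan(√c/m). -/
open Real

/-!
With `x = √c·a` and `y = √c·b`, the cotangent sum is `sin (x + y) / (sin x · sin y)`. For a fixed
sum `x + y ≤ π` it is least at `x = y`, where the product of sines is greatest, so the mirror
equation forces `√c · cot ((x + y) / 2) ≤ m`, which inverts to `arctan (√c / m) ≤ (x + y) / 2`.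
When `x + y ≥ π` the last bound is just `arctan < π / 2`.
-/

theorem cot_add_cot {x y : ℝ} (hx : sin x ≠ 0) (hy : sin y ≠ 0) :
    cot x + cot y = sin (x + y) / (sin x * sin y) := by
  rw [cot_eq_cos_div_sin, cot_eq_cos_div_sin, div_add_div _ _ hx hy, sin_add]
  ring

theorem sin_mul_sin_le_sin_midpoint_sq (x y : ℝ) :
    sin x * sin y ≤ sin ((x + y) / 2) ^ 2 := by
  have product_to_sum : 2 * sin x * sin y = cos (x - y) - cos (x + y) := two_mul_sin_mul_sin x y
  have half_angle : sin ((x + y) / 2) ^ 2 = 1 / 2 - cos (x + y) / 2 := by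
    rw [sin_sq_eq_half_sub, mul_div_cancel₀ _ two_ne_zero]
  linarith [cos_le_one (x - y)]

theorem two_mul_cot_midpoint_le_cot_add_cot {x y : ℝ} (hx : 0 < x) (hy : 0 < y)
    (hxy : x + y ≤ π) : 2 * cot ((x + y) / 2) ≤ cot x + cot y := by
  have sin_x_pos : 0 < sin x := sin_pos_of_pos_of_lt_pi hx (by linarith)
  have sin_y_pos : 0 < sin y := sin_pos_of_pos_of_lt_pi hy (by linarith)
  have sin_midpoint_pos : 0 < sin ((x + y) / 2) :=
    sin_pos_of_pos_of_lt_pi (by linarith) (by linarith)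
  have sin_add_nonneg : 0 ≤ sin (x + y) := sin_nonneg_of_nonneg_of_le_pi (by linarith) hxy
  calc 2 * cot ((x + y) / 2)
      = sin (x + y) / sin ((x + y) / 2) ^ 2 := by
        rw [two_mul, cot_add_cot sin_midpoint_pos.ne' sin_midpoint_pos.ne', add_halves, sq]
    _ ≤ sin (x + y) / (sin x * sin y) :=
        div_le_div_of_nonneg_left sin_add_nonneg (mul_pos sin_x_pos sin_y_pos)
          (sin_mul_sin_le_sin_midpoint_sq x y)
    _ = cot x + cot y := (cot_add_cot sin_x_pos.ne' sin_y_pos.ne').symm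

theorem arctan_div_le_iff_mul_cot_le {k m u : ℝ} (hm : 0 < m) (hu_pos : 0 < u)
    (hu_lt : u < π / 2) : arctan (k / m) ≤ u ↔ k * cot u ≤ m := by
  have sin_pos : 0 < sin u := sin_pos_of_pos_of_lt_pi hu_pos (by linarith)
  have cos_pos : 0 < cos u := cos_pos_of_mem_Ioo ⟨by linarith, hu_lt⟩
  calc arctan (k / m) ≤ u
      ↔ k / m ≤ tan u := by
        rw [← arctan_le_arctan_iff (y := tan u), arctan_tan (by linarith) hu_lt]
    _ ↔ k * cos u ≤ m * sin u := by
        rw [tan_eq_sin_div_cos, div_le_div_iff₀ hm cos_pos, mul_comm (sin u)]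
    _ ↔ k * cot u ≤ m := by
        rw [cot_eq_cos_div_sin, mul_div_assoc', div_le_iff₀ sin_pos]

theorem arctan_div_le_midpoint_of_mul_cot_add_cot_le {k m x y : ℝ} (hk : 0 ≤ k) (hm : 0 < m)
    (hx : 0 < x) (hy : 0 < y) (h : k * (cot x + cot y) ≤ 2 * m) :
    arctan (k / m) ≤ (x + y) / 2 := by
  rcases lt_or_ge (x + y) π with hxy | hxy
  · have cot_midpoint_le : k * (2 * cot ((x + y) / 2)) ≤ k * (cot x + cot y) :=
      mul_le_mul_of_nonneg_left (two_mul_cot_midpoint_le_cot_add_cot hx hy hxy.le) hk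
    rw [arctan_div_le_iff_mul_cot_le hm (by linarith) (by linarith)]
    linarith
  · linarith [arctan_lt_pi_div_two (k / m)]

theorem sum_ge_of_cot_mirror_general (c m a b : ℝ)
    (hc : 0 < c) (hm : 0 < m) (ha : 0 < a) (hb : 0 < b)
    (hmirror : √c * (cot (√c * a) + cot (√c * b)) ≤ 2 * m) :
    a + b ≥ (2 / √c) * arctan (√c / m) := by
  have sqrt_pos : 0 < √c := sqrt_pos.mpr hc
  have arctan_le : arctan (√c / m) ≤ (√c * a + √c * b) / 2 :=
    arctan_div_le_midpoint_of_mul_cot_add_cot_le sqrt_pos.le hm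
      (mul_pos sqrt_pos ha) (mul_pos sqrt_pos hb) hmirror
  rw [ge_iff_le, div_mul_eq_mul_div, div_le_iff₀ sqrt_pos]
  linarith

/-- Inverted form of the cotangent midpoint inequality: if `c > 0`, `m > 0`,
`a, b > 0`, `√c·(a+b) < π` and `√c·(cot(√c·a) + cot(√c·b)) = 2m`, then
`a + b ≥ (2/√c)·arctan(√c/m)`. -/
theorem sum_ge_of_cot_mirror (c m a b : ℝ)
    (hc : 0 < c) (hm : 0 < m) (ha : 0 < a) (hb : 0 < b)
    (hab : Real.sqrt c * (a + b) < π)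
    (hmirror : Real.sqrt c * (Real.cot (Real.sqrt c * a) + Real.cot (Real.sqrt c * b)) = 2 * m) :
    a + b ≥ (2 / Real.sqrt c) * Real.arctan (Real.sqrt c / m) :=
  sum_ge_of_cot_mirror_general c m a b hc hm ha hb hmirror.le
end

section
/- For all real numbers k > β > 0, the integral ∫₀^π (2/β)·arctan( β·sin φ / (k − β·cos φ) )·sin φ dφ equals π/k. In particular, this integral is independent of β. -/
open Real intervalIntegral

/-!
In a triangle with sides `k` and `β` enclosing the angle `φ`, let `T φ` be the angle opposite `β`
and `D φ = k² + β² - 2kβ cos φ` the square of the third side. Then `D' = 2kβ sin φ` and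
`D T' = kβ cos φ - β²`. Since `T` vanishes at `0` and `π`, integration by parts gives
`2kβ ∫ T sin = ∫ T D' = -∫ D T' = πβ²`.
-/

theorem hasDerivAt_arctan_div {f g : ℝ → ℝ} {f' g' x : ℝ} (hf : HasDerivAt f f' x)
    (hg : HasDerivAt g g' x) (hx : g x ≠ 0) :
    HasDerivAt (fun y ↦ arctan (f y / g y)) ((f' * g x - f x * g') / (g x ^ 2 + f x ^ 2)) x := by
  refine (hf.fun_div hg hx).arctan.congr_deriv ?_
  have : g x ^ 2 + f x ^ 2 ≠ 0 := by positivity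
  field_simp

/-- The square of the third side of a triangle with sides `k` and `β` enclosing the angle `φ`, by
the law of cosines. -/
noncomputable def sqThirdSide (k β φ : ℝ) : ℝ :=
  k ^ 2 + β ^ 2 - 2 * k * β * cos φ

/-- The angle opposite the side `β` in a triangle with sides `k` and `β` enclosing the angle `φ`,
as the arctangent of the altitude `β sin φ` over the remaining part of the side `k`. It is the
actual angle only if `β cos φ < k`. -/
noncomputable def oppositeAngle (k β φ : ℝ) : ℝ :=
  arctan (β * sin φ / (k - β * cos φ))

section Triangle

variable (k β : ℝ)

theorem sqThirdSide_eq_sq_add_sq (φ : ℝ) :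
    sqThirdSide k β φ = (k - β * cos φ) ^ 2 + (β * sin φ) ^ 2 := by
  rw [sqThirdSide]
  linear_combination -β ^ 2 * sin_sq_add_cos_sq φ

theorem continuous_sqThirdSide : Continuous (sqThirdSide k β) := by
  unfold sqThirdSide
  fun_prop

theorem hasDerivAt_sqThirdSide (φ : ℝ) :
    HasDerivAt (sqThirdSide k β) (2 * k * β * sin φ) φ :=
  (((hasDerivAt_cos φ).const_mul (2 * k * β)).const_sub (k ^ 2 + β ^ 2)).congr_deriv (by ring)

theorem oppositeAngle_zero : oppositeAngle k β 0 = 0 := by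
  simp [oppositeAngle]

theorem oppositeAngle_pi : oppositeAngle k β π = 0 := by
  simp [oppositeAngle]

variable {k β}

theorem sub_mul_cos_ne_zero (h : |β| < |k|) (φ : ℝ) : k - β * cos φ ≠ 0 := by
  refine sub_ne_zero.2 fun hk ↦ h.not_ge ?_
  rw [hk, abs_mul]
  exact mul_le_of_le_one_right (abs_nonneg β) (abs_cos_le_one φ)

theorem sqThirdSide_ne_zero (h : |β| < |k|) (φ : ℝ) : sqThirdSide k β φ ≠ 0 := by
  have := sub_mul_cos_ne_zero h φ
  rw [sqThirdSide_eq_sq_add_sq]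
  positivity

theorem hasDerivAt_oppositeAngle {φ : ℝ} (h : k - β * cos φ ≠ 0) :
    HasDerivAt (oppositeAngle k β) ((k * β * cos φ - β ^ 2) / sqThirdSide k β φ) φ := by
  have altitude : HasDerivAt (fun φ ↦ β * sin φ) (β * cos φ) φ := (hasDerivAt_sin φ).const_mul β
  have foot : HasDerivAt (fun φ ↦ k - β * cos φ) (-(β * -sin φ)) φ :=
    ((hasDerivAt_cos φ).const_mul β).const_sub k
  refine (hasDerivAt_arctan_div altitude foot h).congr_deriv ?_
  rw [← sqThirdSide_eq_sq_add_sq]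
  congr 1
  linear_combination -β ^ 2 * sin_sq_add_cos_sq φ

theorem integral_oppositeAngle_mul_deriv_sqThirdSide (h : |β| < |k|) :
    ∫ φ in 0..π, oppositeAngle k β φ * (2 * k * β * sin φ) = π * β ^ 2 := by
  have deriv_integrable : IntervalIntegrable
      (fun φ ↦ (k * β * cos φ - β ^ 2) / sqThirdSide k β φ) MeasureTheory.volume 0 π :=
    (Continuous.div (by fun_prop) (continuous_sqThirdSide k β)
      (sqThirdSide_ne_zero h)).intervalIntegrable _ _
  rw [integral_mul_deriv_eq_deriv_mul
    (fun φ _ ↦ hasDerivAt_oppositeAngle (sub_mul_cos_ne_zero h φ))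
    (fun φ _ ↦ hasDerivAt_sqThirdSide k β φ) deriv_integrable
    (Continuous.intervalIntegrable (by fun_prop) _ _)]
  simp only [oppositeAngle_zero, oppositeAngle_pi, div_mul_cancel₀ _ (sqThirdSide_ne_zero h _)]
  rw [integral_sub (Continuous.intervalIntegrable (by fun_prop) _ _) intervalIntegrable_const]
  simp

end Triangle

theorem planar_inner_integral_general (k β : ℝ) (hβ : β ≠ 0) (hk : |β| < |k|) :
    ∫ φ in (0:ℝ)..π, (2 / β) * arctan (β * sin φ / (k - β * cos φ)) * sin φ = π / k := by
  have hk₀ : k ≠ 0 := abs_pos.1 ((abs_nonneg β).trans_lt hk)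
  calc ∫ φ in (0:ℝ)..π, (2 / β) * oppositeAngle k β φ * sin φ
      = ∫ φ in (0:ℝ)..π, 1 / (k * β ^ 2) * (oppositeAngle k β φ * (2 * k * β * sin φ)) := by
        congr 1 with φ
        field_simp
    _ = 1 / (k * β ^ 2) * (π * β ^ 2) := by
        rw [integral_const_mul, integral_oppositeAngle_mul_deriv_sqThirdSide hk]
    _ = π / k := by field_simp

/-- Planar case (K = 0): for `k > β > 0`,
`∫₀^π (2/β)·arctan(β sin φ / (k − β cos φ))·sin φ dφ = π/k`,
independently of `β`. -/
theorem planar_inner_integral (k β : ℝ) (hβ : 0 < β) (hk : β < k) :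
    ∫ φ in (0:ℝ)..π,
      (2 / β) * Real.arctan (β * Real.sin φ / (k - β * Real.cos φ)) * Real.sin φ
      = π / k :=
  planar_inner_integral_general k β hβ.ne' (by rwa [abs_of_pos hβ, abs_of_pos (hβ.trans hk)])
end

section
/- For all real numbers k > β ≥ 0, the integral ∫₀^π (2/√(1+β²))·arctan( √(1+β²)·sin φ / (k − β·cos φ) )·sin φ dφ equals 2π(√(k²+1) − k). In particular, this integral is independent of β. -/
open Real intervalIntegral

/-!
With `s = √(1 + β²)` and `c = √(k² + 1) - k`, the trigonometric polynomial
`k - β cos φ + i s sin φ` is a positive multiple of `(1 - p e^{-iφ}) (1 - q e^{iφ})`, where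
`p = c (β + s)` and `q = c (β - s)` both lie in `(-1, 1)`. Taking arguments writes the arctangent
as the difference of two angles with sine series `∑ pⁿ sin (nφ) / n` and `∑ qⁿ sin (nφ) / n`,
whose first coefficients, picked out by integration against `sin φ`, are `p` and `q`. Since
`p - q = 2 c s`, the factor `2 / s` removes all dependence on `β`.
-/

lemma mul_cos_le_abs (a φ : ℝ) : a * cos φ ≤ |a| :=
  (le_abs_self _).trans <| by
    rw [abs_mul]
    exact mul_le_of_le_one_right (abs_nonneg a) (abs_cos_le_one φ)

/-- The argument of `1 - p * exp (-φ * I)`, for `|p| < 1`. The arctangent of the slope is the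
argument because the real part `1 - p * cos φ` is then positive. -/
noncomputable def argOneSub (p φ : ℝ) : ℝ :=
  arctan (p * sin φ / (1 - p * cos φ))

section argOneSub

variable {p q : ℝ}

lemma one_sub_mul_cos_pos (hp : |p| < 1) (φ : ℝ) : 0 < 1 - p * cos φ :=
  sub_pos.mpr ((mul_cos_le_abs p φ).trans_lt hp)

lemma one_add_mul_sub_add_mul_cos_pos (hp : |p| < 1) (hq : |q| < 1) (φ : ℝ) :
    0 < 1 + p * q - (p + q) * cos φ := by
  obtain ⟨hp₁, hp₂⟩ := abs_lt.mp hp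
  obtain ⟨hq₁, hq₂⟩ := abs_lt.mp hq
  have hsum : |p + q| < 1 + p * q := abs_lt.mpr ⟨by nlinarith, by nlinarith⟩
  exact sub_pos.mpr ((mul_cos_le_abs (p + q) φ).trans_lt hsum)

lemma one_add_sq_sub_two_mul_mul_cos_pos (hp : |p| < 1) (φ : ℝ) :
    0 < 1 + p ^ 2 - 2 * p * cos φ := by
  simpa only [sq, two_mul] using one_add_mul_sub_add_mul_cos_pos hp hp φ

lemma argOneSub_sub_argOneSub (hp : |p| < 1) (hq : |q| < 1) (φ : ℝ) :
    argOneSub p φ - argOneSub q φ =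
      arctan ((p - q) * sin φ / (1 + p * q - (p + q) * cos φ)) := by
  have hp₀ := one_sub_mul_cos_pos hp φ
  have hq₀ := one_sub_mul_cos_pos hq φ
  have hpq := one_add_mul_sub_add_mul_cos_pos hp hq φ
  set u := p * sin φ / (1 - p * cos φ) with hu
  set v := q * sin φ / (1 - q * cos φ) with hv
  have hsub : u - v = (p - q) * sin φ / ((1 - p * cos φ) * (1 - q * cos φ)) := by
    rw [hu, hv, div_sub_div _ _ hp₀.ne' hq₀.ne']
    ring
  have hadd : 1 - u * -v =
      (1 + p * q - (p + q) * cos φ) / ((1 - p * cos φ) * (1 - q * cos φ)) := by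
    rw [hu, hv, mul_neg, sub_neg_eq_add, div_mul_div_comm, one_add_div (by positivity)]
    congr 1
    linear_combination p * q * sin_sq_add_cos_sq φ
  have huv : u * -v < 1 := sub_pos.mp (hadd ▸ by positivity)
  calc arctan u - arctan v = arctan ((u + -v) / (1 - u * -v)) := by
        rw [sub_eq_add_neg, ← arctan_neg, arctan_add huv]
    _ = _ := by
        rw [← sub_eq_add_neg, hsub, hadd, div_div_div_cancel_right₀ (by positivity)]

lemma hasDerivAt_argOneSub (hp : |p| < 1) (φ : ℝ) :
    HasDerivAt (argOneSub p) (p * (cos φ - p) / (1 + p ^ 2 - 2 * p * cos φ)) φ := by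
  have hden := one_sub_mul_cos_pos hp φ
  have hslope : 1 + (p * sin φ / (1 - p * cos φ)) ^ 2 =
      (1 + p ^ 2 - 2 * p * cos φ) / (1 - p * cos φ) ^ 2 := by
    field_simp
    linear_combination p ^ 2 * sin_sq_add_cos_sq φ
  refine (((hasDerivAt_sin φ).const_mul p).fun_div
    (((hasDerivAt_cos φ).const_mul p).const_sub 1) hden.ne').arctan.congr_deriv ?_
  rw [hslope, one_div_div, mul_comm, div_mul_div_cancel₀ (by positivity)]
  congr 1
  linear_combination -p ^ 2 * sin_sq_add_cos_sq φ

lemma continuous_argOneSub (hp : |p| < 1) : Continuous (argOneSub p) :=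
  continuous_iff_continuousAt.mpr fun φ ↦ (hasDerivAt_argOneSub hp φ).continuousAt

/-- Up to a constant factor, `1 + p ^ 2 - 2 * p * cos φ` is the antiderivative of `sin` that
cancels the denominator of the derivative of `argOneSub p` in an integration by parts. -/
lemma hasDerivAt_antideriv_argOneSub_mul_sin (hp : |p| < 1) (hp₀ : p ≠ 0) (φ : ℝ) :
    HasDerivAt
      (fun φ ↦ (1 + p ^ 2 - 2 * p * cos φ) * argOneSub p φ / (2 * p) + (p * φ - sin φ) / 2)
      (argOneSub p φ * sin φ) φ := by
  have hnorm := one_add_sq_sub_two_mul_mul_cos_pos hp φ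
  have hprod := ((((hasDerivAt_cos φ).const_mul (2 * p)).const_sub (1 + p ^ 2)).fun_mul
    (hasDerivAt_argOneSub hp φ)).div_const (2 * p)
  have hlin := (((hasDerivAt_id' φ).const_mul p).fun_sub (hasDerivAt_sin φ)).div_const 2
  refine (hprod.fun_add hlin).congr_deriv ?_
  field_simp
  ring

lemma integral_argOneSub_mul_sin (hp : |p| < 1) :
    ∫ φ in 0..π, argOneSub p φ * sin φ = π / 2 * p := by
  rcases eq_or_ne p 0 with rfl | hp₀
  · simp [argOneSub]
  rw [integral_eq_sub_of_hasDerivAt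
    (fun φ _ ↦ hasDerivAt_antideriv_argOneSub_mul_sin hp hp₀ φ)
    (((continuous_argOneSub hp).mul continuous_sin).intervalIntegrable 0 π)]
  simp only [argOneSub, sin_zero, sin_pi, mul_zero, zero_div, arctan_zero]
  ring

lemma integral_arctan_mul_sin (hp : |p| < 1) (hq : |q| < 1) :
    ∫ φ in 0..π, arctan ((p - q) * sin φ / (1 + p * q - (p + q) * cos φ)) * sin φ =
      π / 2 * (p - q) := by
  have hint {a : ℝ} (ha : |a| < 1) :
      IntervalIntegrable (fun φ ↦ argOneSub a φ * sin φ) MeasureTheory.volume 0 π :=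
    ((continuous_argOneSub ha).mul continuous_sin).intervalIntegrable 0 π
  simp_rw [← argOneSub_sub_argOneSub hp hq, sub_mul]
  rw [integral_sub (hint hp) (hint hq), integral_argOneSub_mul_sin hp,
    integral_argOneSub_mul_sin hq, mul_sub]

end argOneSub

section Factorization

variable {k β : ℝ}

lemma sqrt_sq_add_one_sub_self_pos (k : ℝ) : 0 < √(k ^ 2 + 1) - k :=
  sub_pos.mpr (lt_sqrt_of_sq_lt (lt_add_one _))

lemma sqrt_sq_add_one_sub_self_mul_lt_one (hβ : |β| < k) :
    (√(k ^ 2 + 1) - k) * (|β| + √(1 + β ^ 2)) < 1 := by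
  have hsqrt : √(1 + β ^ 2) < √(k ^ 2 + 1) := by
    refine sqrt_lt_sqrt (by positivity) ?_
    linarith [sq_lt_sq.mpr (hβ.trans_le (le_abs_self k))]
  calc (√(k ^ 2 + 1) - k) * (|β| + √(1 + β ^ 2))
      < (√(k ^ 2 + 1) - k) * (k + √(k ^ 2 + 1)) :=
        mul_lt_mul_of_pos_left (add_lt_add hβ hsqrt) (sqrt_sq_add_one_sub_self_pos k)
    _ = √(k ^ 2 + 1) ^ 2 - k ^ 2 := by ring
    _ = 1 := by rw [sq_sqrt (by positivity)]; ring

lemma exists_abs_lt_one_factorization (hβ : |β| < k) :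
    ∃ p q : ℝ, |p| < 1 ∧ |q| < 1 ∧
      p - q = 2 * (√(k ^ 2 + 1) - k) * √(1 + β ^ 2) ∧
      p + q = 2 * (√(k ^ 2 + 1) - k) * β ∧
      1 + p * q = 2 * (√(k ^ 2 + 1) - k) * k := by
  have hbound := sqrt_sq_add_one_sub_self_mul_lt_one hβ
  have hs : √(1 + β ^ 2) ^ 2 = 1 + β ^ 2 := sq_sqrt (by positivity)
  have hr : √(k ^ 2 + 1) ^ 2 = k ^ 2 + 1 := sq_sqrt (by positivity)
  have hs₀ := sqrt_nonneg (1 + β ^ 2)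
  have hc := sqrt_sq_add_one_sub_self_pos k
  set s := √(1 + β ^ 2)
  set r := √(k ^ 2 + 1)
  have habs {x : ℝ} (hx : |x| ≤ |β| + s) : |(r - k) * x| < 1 := by
    rw [abs_mul, abs_of_pos hc]
    exact (mul_le_mul_of_nonneg_left hx hc.le).trans_lt hbound
  refine ⟨(r - k) * (β + s), (r - k) * (β - s), habs ?_, habs ?_, by ring, by ring, ?_⟩
  · simpa only [abs_of_nonneg hs₀] using abs_add_le β s
  · simpa only [abs_of_nonneg hs₀] using abs_sub β s
  · linear_combination -(r - k) ^ 2 * hs - hr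

end Factorization

theorem spherical_inner_integral_general (k β : ℝ) (hβ : |β| < k) :
    ∫ φ in 0..π,
      2 / √(1 + β ^ 2) * arctan (√(1 + β ^ 2) * sin φ / (k - β * cos φ)) * sin φ =
        2 * π * (√(k ^ 2 + 1) - k) := by
  obtain ⟨p, q, hp, hq, hsub, hadd, hmul⟩ := exists_abs_lt_one_factorization hβ
  have hc : 2 * (√(k ^ 2 + 1) - k) ≠ 0 :=
    mul_ne_zero two_ne_zero (sqrt_sq_add_one_sub_self_pos k).ne'
  have hs : √(1 + β ^ 2) ≠ 0 := by positivity
  have hslope (φ : ℝ) : √(1 + β ^ 2) * sin φ / (k - β * cos φ) =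
      (p - q) * sin φ / (1 + p * q - (p + q) * cos φ) := by
    rw [hsub, hadd, hmul, mul_assoc _ _ (sin φ), mul_assoc _ β, ← mul_sub,
      mul_div_mul_left _ _ hc]
  simp_rw [hslope, mul_assoc (2 / √(1 + β ^ 2))]
  rw [integral_const_mul, integral_arctan_mul_sin hp hq, hsub]
  field_simp

/-- Spherical case (K = 1): for `k > β ≥ 0`,
`∫₀^π (2/√(1+β²))·arctan(√(1+β²) sin φ / (k − β cos φ))·sin φ dφ
  = 2π(√(k²+1) − k)`, independently of `β`. -/
theorem spherical_inner_integral (k β : ℝ) (hβ : 0 ≤ β) (hk : β < k) :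
    ∫ φ in (0:ℝ)..π,
      (2 / Real.sqrt (1 + β ^ 2)) *
        Real.arctan (Real.sqrt (1 + β ^ 2) * Real.sin φ / (k - β * Real.cos φ)) *
        Real.sin φ
      = 2 * π * (Real.sqrt (k ^ 2 + 1) - k) :=
  spherical_inner_integral_general k β (by rwa [abs_of_nonneg hβ])
end

section
/- For all real numbers k > β > 1, the integral ∫₀^π (2/√(β²−1))·arctan( √(β²−1)·sin φ / (k − β·cos φ) )·sin φ dφ equals 2π(k − √(k²−1)). In particular, this integral is independent of β. -/
open Real intervalIntegral

/-!
Write `k = cosh u` and `|β| = cosh v` with `0 < v < u`, so that `√(k² - 1) = sinh u` and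
`√(β² - 1) = sinh v`. The subtraction formula for `arctan` splits the angle in the integrand as
`-arg (1 - p e^{iφ}) + arg (1 - q e^{iφ})`, where `p = e^{-(u - v)}` and `q = e^{-(u + v)}` if
`β > 0`, and `p = -e^{-(u + v)}` and `q = -e^{-(u - v)}` if `β < 0`. For `|r| < 1`, the Fourier
series `-arg (1 - r e^{iφ}) = ∑ rⁿ sin (n φ) / n` shows that the integral of this angle against
`sin φ` over `[0, π]` is `π r / 2`; an elementary antiderivative gives the same value without
summing the series. As `p - q = 2 e^{-u} sinh v`, the factor `2 / sinh v` cancels and `2 π e^{-u}`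
remains.
-/

lemma sub_mul_cos_pos {a b : ℝ} (hab : |b| < a) (φ : ℝ) : 0 < a - b * cos φ := by
  have hle : |b * cos φ| ≤ |b| := by
    rw [abs_mul]
    exact mul_le_of_le_one_right (abs_nonneg b) (abs_cos_le_one φ)
  linarith [le_abs_self (b * cos φ)]

lemma arctan_div_sub_arctan_div {a b c d : ℝ} (hb : 0 < b) (hd : 0 < d)
    (habcd : 0 < b * d + a * c) :
    arctan (a / b) - arctan (c / d) = arctan ((a * d - c * b) / (b * d + a * c)) := by
  have hone_sub : 1 - a / b * -(c / d) = (b * d + a * c) / (b * d) := by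
    field_simp
    ring
  have hmul_lt_one : a / b * -(c / d) < 1 := by
    rw [← sub_pos, hone_sub]
    positivity
  rw [sub_eq_add_neg, ← arctan_neg, arctan_add hmul_lt_one, hone_sub]
  congr 1
  field_simp
  ring

/-- The angle `-arg (1 - r e^{iφ})`, written with `arctan`; the two agree when `|r| < 1`, because
then `1 - r e^{iφ}` has positive real part. -/
noncomputable def diskAngle (r φ : ℝ) : ℝ :=
  arctan (r * sin φ / (1 - r * cos φ))

section DiskAngle

variable {p q r : ℝ}

lemma one_sub_mul_cos_sq_add_mul_sin_sq (r φ : ℝ) :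
    (1 - r * cos φ) ^ 2 + (r * sin φ) ^ 2 = 1 - 2 * r * cos φ + r ^ 2 := by
  linear_combination r ^ 2 * sin_sq_add_cos_sq φ

lemma one_sub_two_mul_cos_add_sq_pos (hr : |r| < 1) (φ : ℝ) :
    0 < 1 - 2 * r * cos φ + r ^ 2 := by
  have := sub_mul_cos_pos hr φ
  rw [← one_sub_mul_cos_sq_add_mul_sin_sq]
  positivity

lemma hasDerivAt_diskAngle (hr : |r| < 1) (φ : ℝ) :
    HasDerivAt (diskAngle r) (r * (cos φ - r) / (1 - 2 * r * cos φ + r ^ 2)) φ := by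
  have hden := (sub_mul_cos_pos hr φ).ne'
  have hnorm_ne := (one_sub_two_mul_cos_add_sq_pos hr φ).ne'
  have hone_add_sq : 1 + (r * sin φ / (1 - r * cos φ)) ^ 2
      = (1 - 2 * r * cos φ + r ^ 2) / (1 - r * cos φ) ^ 2 := by
    rw [← one_sub_mul_cos_sq_add_mul_sin_sq]
    field_simp
  refine (((hasDerivAt_sin φ).const_mul r).div
    (((hasDerivAt_cos φ).const_mul r).const_sub 1) hden).arctan.congr_deriv ?_
  simp only [Pi.div_apply]
  rw [hone_add_sq]
  field_simp
  linear_combination -r ^ 2 * sin_sq_add_cos_sq φ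

lemma continuous_diskAngle (hr : |r| < 1) : Continuous (diskAngle r) :=
  continuous_iff_continuousAt.mpr fun φ => (hasDerivAt_diskAngle hr φ).continuousAt

lemma intervalIntegrable_diskAngle_mul_sin (hr : |r| < 1) (a b : ℝ) :
    IntervalIntegrable (fun φ => diskAngle r φ * sin φ) MeasureTheory.volume a b :=
  ((continuous_diskAngle hr).mul continuous_sin).intervalIntegrable a b

lemma hasDerivAt_antideriv_diskAngle_mul_sin (hr : |r| < 1) (φ : ℝ) :
    HasDerivAt
      (fun x => (1 - 2 * r * cos x + r ^ 2) * diskAngle r x - r * sin x + r ^ 2 * x)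
      (2 * r * (diskAngle r φ * sin φ)) φ := by
  have hnorm_ne := (one_sub_two_mul_cos_add_sq_pos hr φ).ne'
  have hnorm := (((hasDerivAt_cos φ).const_mul (2 * r)).const_sub 1).add_const (r ^ 2)
  refine (((hnorm.mul (hasDerivAt_diskAngle hr φ)).sub ((hasDerivAt_sin φ).const_mul r)).add
    ((hasDerivAt_id φ).const_mul (r ^ 2))).congr_deriv ?_
  field_simp
  ring

lemma integral_diskAngle_mul_sin (hr : |r| < 1) :
    ∫ φ in (0 : ℝ)..π, diskAngle r φ * sin φ = π / 2 * r := by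
  rcases eq_or_ne r 0 with rfl | hr0
  · simp [diskAngle]
  have hscaled : 2 * r * ∫ φ in (0 : ℝ)..π, diskAngle r φ * sin φ = r ^ 2 * π := by
    rw [← integral_const_mul, integral_eq_sub_of_hasDerivAt
      (fun φ _ => hasDerivAt_antideriv_diskAngle_mul_sin hr φ)
      ((intervalIntegrable_diskAngle_mul_sin hr 0 π).const_mul (2 * r))]
    simp [diskAngle]
  refine mul_left_cancel₀ (mul_ne_zero two_ne_zero hr0) ?_
  linear_combination hscaled

lemma abs_add_lt_one_add_mul (hp : |p| < 1) (hq : |q| < 1) : |p + q| < 1 + p * q := by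
  obtain ⟨hp₁, hp₂⟩ := abs_lt.mp hp
  obtain ⟨hq₁, hq₂⟩ := abs_lt.mp hq
  have hplus : 0 < (1 + p) * (1 + q) := mul_pos (by linarith) (by linarith)
  have hminus : 0 < (1 - p) * (1 - q) := mul_pos (by linarith) (by linarith)
  exact abs_lt.mpr ⟨by linarith, by linarith⟩

lemma diskAngle_sub_diskAngle (hp : |p| < 1) (hq : |q| < 1) (φ : ℝ) :
    diskAngle p φ - diskAngle q φ
      = arctan ((p - q) * sin φ / (1 + p * q - (p + q) * cos φ)) := by
  have hden : (1 - p * cos φ) * (1 - q * cos φ) + p * sin φ * (q * sin φ)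
      = 1 + p * q - (p + q) * cos φ := by
    linear_combination p * q * sin_sq_add_cos_sq φ
  have hden_pos := sub_mul_cos_pos (abs_add_lt_one_add_mul hp hq) φ
  rw [diskAngle, diskAngle, arctan_div_sub_arctan_div (sub_mul_cos_pos hp φ)
    (sub_mul_cos_pos hq φ) (hden ▸ hden_pos), hden]
  ring_nf

lemma integral_arctan_sub_mul_sin_div_mul_sin (hp : |p| < 1) (hq : |q| < 1) :
    ∫ φ in (0 : ℝ)..π,
      arctan ((p - q) * sin φ / (1 + p * q - (p + q) * cos φ)) * sin φ = π / 2 * (p - q) := by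
  simp_rw [← diskAngle_sub_diskAngle hp hq, sub_mul]
  rw [integral_sub (intervalIntegrable_diskAngle_mul_sin hp 0 π)
    (intervalIntegrable_diskAngle_mul_sin hq 0 π), integral_diskAngle_mul_sin hp,
    integral_diskAngle_mul_sin hq, mul_sub]

end DiskAngle

section HyperbolicParameters

variable {k β m s : ℝ}

lemma sub_pos_of_sq_eq_sq_sub_one (hk : 0 < k) (hm : m ^ 2 = k ^ 2 - 1) : 0 < k - m :=
  sub_pos.mpr (lt_of_pow_lt_pow_left₀ 2 hk.le (by linarith))

lemma abs_sub_mul_add_lt_one (hm₀ : 0 ≤ m) (hm : m ^ 2 = k ^ 2 - 1)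
    (hs : s ^ 2 = β ^ 2 - 1) (hk : |β| < k) : |(k - m) * (β + s)| < 1 := by
  have hkm := sub_pos_of_sq_eq_sq_sub_one ((abs_nonneg β).trans_lt hk) hm
  have hsm : |s| < m := abs_lt_of_sq_lt_sq (by nlinarith [sq_abs β, abs_nonneg β]) hm₀
  calc |(k - m) * (β + s)| = (k - m) * |β + s| := by rw [abs_mul, abs_of_pos hkm]
    _ < (k - m) * (k + m) := by gcongr; linarith [abs_add_le β s]
    _ = 1 := by linear_combination -hm

lemma integral_arctan_mul_sin_div_sub_mul_cos_mul_sin (hm₀ : 0 ≤ m) (hm : m ^ 2 = k ^ 2 - 1)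
    (hs : s ^ 2 = β ^ 2 - 1) (hk : |β| < k) :
    ∫ φ in (0 : ℝ)..π, arctan (s * sin φ / (k - β * cos φ)) * sin φ = π * s * (k - m) := by
  have hkm := sub_pos_of_sq_eq_sq_sub_one ((abs_nonneg β).trans_lt hk) hm
  obtain ⟨p, hp_def⟩ : ∃ p, p = (k - m) * (β + s) := ⟨_, rfl⟩
  obtain ⟨q, hq_def⟩ : ∃ q, q = (k - m) * (β + -s) := ⟨_, rfl⟩
  have hp : |p| < 1 := hp_def ▸ abs_sub_mul_add_lt_one hm₀ hm hs hk
  have hq : |q| < 1 := hq_def ▸ abs_sub_mul_add_lt_one hm₀ hm (by rw [neg_sq, hs]) hk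
  have hsub : p - q = 2 * (k - m) * s := by rw [hp_def, hq_def]; ring
  have hadd : p + q = 2 * (k - m) * β := by rw [hp_def, hq_def]; ring
  have hone_add : 1 + p * q = 2 * (k - m) * k := by
    rw [hp_def, hq_def]
    linear_combination -(k - m) ^ 2 * hs + hm
  have hquot (φ : ℝ) : s * sin φ / (k - β * cos φ)
      = (p - q) * sin φ / (1 + p * q - (p + q) * cos φ) := by
    rw [hsub, hadd, hone_add, mul_assoc _ s, mul_assoc _ β, ← mul_sub,
      mul_div_mul_left _ _ (mul_pos two_pos hkm).ne']
  simp_rw [hquot]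
  rw [integral_arctan_sub_mul_sin_div_mul_sin hp hq, hsub]
  ring

end HyperbolicParameters

theorem hyperbolic_inner_integral_beta_gt_one_general (k β : ℝ) (hβ : 1 < |β|) (hk : |β| < k) :
    ∫ φ in (0 : ℝ)..π,
      (2 / √(β ^ 2 - 1)) * arctan (√(β ^ 2 - 1) * sin φ / (k - β * cos φ)) * sin φ
      = 2 * π * (k - √(k ^ 2 - 1)) := by
  have hβ_sq : 0 < β ^ 2 - 1 := sub_pos.mpr ((one_lt_sq_iff_one_lt_abs β).mpr hβ)
  have hk_sq : 0 < k ^ 2 - 1 := by nlinarith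
  simp_rw [mul_assoc (2 / √(β ^ 2 - 1))]
  rw [integral_const_mul, integral_arctan_mul_sin_div_sub_mul_cos_mul_sin (sqrt_nonneg _)
    (sq_sqrt hk_sq.le) (sq_sqrt hβ_sq.le) hk]
  field_simp

/-- Hyperbolic case with `β > 1` (positive effective curvature): for `k > β > 1`,
`∫₀^π (2/√(β²−1))·arctan(√(β²−1) sin φ / (k − β cos φ))·sin φ dφ
  = 2π(k − √(k²−1))`, independently of `β`. -/
theorem hyperbolic_inner_integral_beta_gt_one (k β : ℝ) (hβ : 1 < β) (hk : β < k) :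
    ∫ φ in (0:ℝ)..π,
      (2 / Real.sqrt (β ^ 2 - 1)) *
        Real.arctan (Real.sqrt (β ^ 2 - 1) * Real.sin φ / (k - β * Real.cos φ)) *
        Real.sin φ
      = 2 * π * (k - Real.sqrt (k ^ 2 - 1)) := by
  have hβ_abs : |β| = β := abs_of_pos (by linarith)
  exact hyperbolic_inner_integral_beta_gt_one_general k β (by rwa [hβ_abs]) (by rwa [hβ_abs])
end

section
/- Let P > 0 and A be real numbers and let k : [0, P] → ℝ be a continuous function with k(x) > 0 for all x ∈ [0, P]. Assume ∫₀^P k(x) dx = 2π − A and A ≥ ∫₀^P ( √(k(x)² + 1) − k(x) ) dx. Then P² + A² − 4πA ≤ 0. -/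
open Real intervalIntegral

/-!
Regard the plane curve with velocity `(k, 1)` on `[0, P]`: its chord is `(∫ k, P) = (2π - A, P)`
and its length is `∫ √(k² + 1)`. The two hypotheses bound the length by `A + ∫ k = 2π`, and a chord
is no longer than its curve, so `(2π - A)² + P² ≤ (2π)²`.
-/

open MeasureTheory

section Minkowski

variable {α : Type*} [MeasurableSpace α] {μ : Measure α} {f g : α → ℝ}

theorem integrable_ofReal_add_ofReal_mul_I (hf : Integrable f μ) (hg : Integrable g μ) :
    Integrable (fun x ↦ (f x + g x * Complex.I : ℂ)) μ :=
  hf.ofReal.add (hg.ofReal.mul_const Complex.I)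

theorem integrable_sqrt_sq_add_sq (hf : Integrable f μ) (hg : Integrable g μ) :
    Integrable (fun x ↦ √(f x ^ 2 + g x ^ 2)) μ := by
  simpa only [Complex.norm_add_mul_I] using (integrable_ofReal_add_ofReal_mul_I hf hg).norm

theorem integral_ofReal_add_ofReal_mul_I (hf : Integrable f μ) (hg : Integrable g μ) :
    ∫ x, (f x + g x * Complex.I : ℂ) ∂μ = (∫ x, f x ∂μ : ℝ) + (∫ x, g x ∂μ : ℝ) * Complex.I := by
  have hfc : Integrable (fun x ↦ (f x : ℂ)) μ := hf.ofReal
  have hgc : Integrable (fun x ↦ (g x * Complex.I : ℂ)) μ := hg.ofReal.mul_const Complex.I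
  rw [MeasureTheory.integral_add hfc hgc, MeasureTheory.integral_mul_const,
    integral_complex_ofReal, integral_complex_ofReal]

theorem sqrt_sq_integral_add_sq_integral_le (hf : Integrable f μ) (hg : Integrable g μ) :
    √((∫ x, f x ∂μ) ^ 2 + (∫ x, g x ∂μ) ^ 2) ≤ ∫ x, √(f x ^ 2 + g x ^ 2) ∂μ := by
  simpa only [integral_ofReal_add_ofReal_mul_I hf hg, Complex.norm_add_mul_I] using
    norm_integral_le_integral_norm (μ := μ) fun x ↦ (f x + g x * Complex.I : ℂ)

end Minkowski

section Interval

variable {a b : ℝ} {k : ℝ → ℝ}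

theorem intervalIntegrable_sqrt_sq_add_one (hk : IntervalIntegrable k volume a b) :
    IntervalIntegrable (fun x ↦ √(k x ^ 2 + 1)) volume a b := by
  have hone : IntervalIntegrable (fun _ ↦ (1 : ℝ)) volume a b := intervalIntegrable_const
  constructor
  · simpa only [IntegrableOn, one_pow] using integrable_sqrt_sq_add_sq hk.1 hone.1
  · simpa only [IntegrableOn, one_pow] using integrable_sqrt_sq_add_sq hk.2 hone.2

theorem sqrt_sq_integral_add_sq_sub_le (hab : a ≤ b) (hk : IntervalIntegrable k volume a b) :
    √((∫ x in a..b, k x) ^ 2 + (b - a) ^ 2) ≤ ∫ x in a..b, √(k x ^ 2 + 1) := by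
  have hone : IntervalIntegrable (fun _ ↦ (1 : ℝ)) volume a b := intervalIntegrable_const
  simpa only [← integral_of_le hab, integral_one, one_pow] using
    sqrt_sq_integral_add_sq_integral_le hk.1 hone.1

end Interval

theorem spherical_final_step_general {P A : ℝ} (hP : 0 ≤ P) {k : ℝ → ℝ}
    (hk : IntervalIntegrable k volume 0 P)
    (hGB : ∫ x in (0 : ℝ)..P, k x = 2 * π - A)
    (hA : ∫ x in (0 : ℝ)..P, (√(k x ^ 2 + 1) - k x) ≤ A) :
    P ^ 2 + A ^ 2 - 4 * π * A ≤ 0 := by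
  have length_le : ∫ x in (0 : ℝ)..P, √(k x ^ 2 + 1) ≤ 2 * π := by
    rw [intervalIntegral.integral_sub (intervalIntegrable_sqrt_sq_add_one hk) hk, hGB] at hA
    linarith
  have chord_le : √((2 * π - A) ^ 2 + P ^ 2) ≤ 2 * π := by
    simpa only [hGB, sub_zero] using (sqrt_sq_integral_add_sq_sub_le hP hk).trans length_le
  have sq_chord_le : (2 * π - A) ^ 2 + P ^ 2 ≤ (2 * π) ^ 2 :=
    (sqrt_le_left two_pi_pos.le).mp chord_le
  linarith

/-- Final arithmetic step of the spherical case: if `P > 0`, `k > 0` is continuous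
on `[0, P]`, `∫₀^P k = 2π − A` and `A ≥ ∫₀^P (√(k²+1) − k)`, then
`P² + A² − 4πA ≤ 0`. -/
theorem spherical_final_step (P A : ℝ) (hP : 0 < P)
    (k : ℝ → ℝ) (hcont : ContinuousOn k (Set.Icc 0 P))
    (hpos : ∀ x ∈ Set.Icc 0 P, 0 < k x)
    (hGB : (∫ x in (0:ℝ)..P, k x) = 2 * π - A)
    (hA : A ≥ ∫ x in (0:ℝ)..P, (Real.sqrt ((k x) ^ 2 + 1) - k x)) :
    P ^ 2 + A ^ 2 - 4 * π * A ≤ 0 :=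
  spherical_final_step_general hP.le (hcont.intervalIntegrable_of_Icc hP.le) hGB hA
end

section
/- Let P > 0 and A be real numbers and let k : [0, P] → ℝ be a continuous function with k(x) ≥ 1 for all x ∈ [0, P]. Assume ∫₀^P k(x) dx = A + 2π and A ≥ ∫₀^P ( k(x) − √(k(x)² − 1) ) dx. Then A² + 4πA − P² ≥ 0. -/
open Real intervalIntegral

/-! The planar vector `(1, √(k² - 1))` has Euclidean length `k`. Integrating it over `[0, P]` gives
the vector `(P, S)` with `S = ∫ √(k² - 1)`, whose length is at most `∫ k = A + 2π`. The bound on `A`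
says exactly that `S ≥ 2π`, so `P² + (2π)² ≤ (A + 2π)²`. -/

section

open MeasureTheory

variable {α : Type*} [MeasurableSpace α] {μ : Measure α}

theorem sq_integral_add_sq_integral_le_sq_integral_sqrt {u v : α → ℝ}
    (hu : Integrable u μ) (hv : Integrable v μ) :
    (∫ x, u x ∂μ) ^ 2 + (∫ x, v x ∂μ) ^ 2 ≤ (∫ x, √(u x ^ 2 + v x ^ 2) ∂μ) ^ 2 := by
  have integral_eq : ∫ x, ((u x : ℂ) + v x * Complex.I) ∂μ
      = (∫ x, u x ∂μ : ℝ) + (∫ x, v x ∂μ : ℝ) * Complex.I := by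
    rw [integral_add hu.ofReal (hv.ofReal.mul_const _),
      MeasureTheory.integral_mul_const, integral_complex_ofReal, integral_complex_ofReal]
  have norm_le := norm_integral_le_integral_norm (μ := μ) fun x ↦ (u x : ℂ) + v x * Complex.I
  simp only [integral_eq, Complex.norm_add_mul_I] at norm_le
  exact (sqrt_le_left (integral_nonneg fun _ ↦ sqrt_nonneg _)).mp norm_le

theorem integrable_sqrt_sq_sub {k : α → ℝ} (hk : Integrable k μ) {c : ℝ} (hc : 0 ≤ c) :
    Integrable (fun x ↦ √(k x ^ 2 - c)) μ := by
  refine hk.mono (continuous_sqrt.comp_aestronglyMeasurable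
    ((hk.aestronglyMeasurable.pow 2).sub aestronglyMeasurable_const)) (.of_forall fun x ↦ ?_)
  rw [norm_of_nonneg (sqrt_nonneg _), norm_eq_abs, ← sqrt_sq_eq_abs]
  exact sqrt_le_sqrt (sub_le_self _ hc)

theorem sq_measureReal_univ_add_sq_integral_sqrt_le {k : α → ℝ} (hk : Integrable k μ)
    (one_le : ∀ᵐ x ∂μ, 1 ≤ k x) :
    μ.real Set.univ ^ 2 + (∫ x, √(k x ^ 2 - 1) ∂μ) ^ 2 ≤ (∫ x, k x ∂μ) ^ 2 := by
  have integrable_one : Integrable (fun _ ↦ (1 : ℝ)) μ :=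
    hk.mono' aestronglyMeasurable_const (by simpa using one_le)
  have sqrt_eq : ∀ᵐ x ∂μ, √(1 + √(k x ^ 2 - 1) ^ 2) = k x := by
    filter_upwards [one_le] with x hx
    rw [sq_sqrt (sub_nonneg.mpr (one_le_pow₀ hx)), add_sub_cancel,
      sqrt_sq (zero_le_one.trans hx)]
  simpa [integral_congr_ae sqrt_eq] using
    sq_integral_add_sq_integral_le_sq_integral_sqrt integrable_one
      (integrable_sqrt_sq_sub hk zero_le_one)

theorem hyperbolic_final_step_general {k : α → ℝ} {A c : ℝ} (hc : 0 ≤ c) (hk : Integrable k μ)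
    (one_le : ∀ᵐ x ∂μ, 1 ≤ k x) (hGB : ∫ x, k x ∂μ = A + c)
    (hA : ∫ x, (k x - √(k x ^ 2 - 1)) ∂μ ≤ A) :
    0 ≤ A ^ 2 + 2 * c * A - μ.real Set.univ ^ 2 := by
  have le_integral_sqrt : c ≤ ∫ x, √(k x ^ 2 - 1) ∂μ := by
    rw [integral_sub hk (integrable_sqrt_sq_sub hk zero_le_one), hGB] at hA
    linarith
  have sq_add_sq_le : μ.real Set.univ ^ 2 + c ^ 2 ≤ (A + c) ^ 2 := calc
    _ ≤ μ.real Set.univ ^ 2 + (∫ x, √(k x ^ 2 - 1) ∂μ) ^ 2 := by gcongr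
    _ ≤ (∫ x, k x ∂μ) ^ 2 := sq_measureReal_univ_add_sq_integral_sqrt_le hk one_le
    _ = (A + c) ^ 2 := by rw [hGB]
  linarith

end

/-- Final arithmetic step of the hyperbolic case: if `P > 0`, `k ≥ 1` is continuous
on `[0, P]`, `∫₀^P k = A + 2π` and `A ≥ ∫₀^P (k − √(k²−1))`, then
`A² + 4πA − P² ≥ 0`. -/
theorem hyperbolic_final_step (P A : ℝ) (hP : 0 < P)
    (k : ℝ → ℝ) (hcont : ContinuousOn k (Set.Icc 0 P))
    (hk : ∀ x ∈ Set.Icc 0 P, 1 ≤ k x)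
    (hGB : (∫ x in (0:ℝ)..P, k x) = A + 2 * π)
    (hA : A ≥ ∫ x in (0:ℝ)..P, (k x - Real.sqrt ((k x) ^ 2 - 1))) :
    A ^ 2 + 4 * π * A - P ^ 2 ≥ 0 := by
  rw [integral_of_le hP.le, ← MeasureTheory.integral_Icc_eq_integral_Ioc] at hGB hA
  have := hyperbolic_final_step_general two_pi_pos.le hcont.integrableOn_Icc
    (MeasureTheory.ae_restrict_of_forall_mem measurableSet_Icc hk) hGB hA
  simpa [hP.le, ← mul_assoc, show (2 : ℝ) * 2 = 4 by norm_num] using this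
end
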